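/- Let (H, Φ, R) be a quasitriangular quasi-bialgebra over a field k. Then H*_R is compatible with the H–H^cop-bimodule structure given by the regular actions: for all f, g ∈ H* and h, h' ∈ H one has h⇀(f·g)↼h' = Σ (h₁⇀f↼h'₂)·(h₂⇀g↼h'₁); moreover ε·f = f·ε = f and h⇀ε↼h' = ε(h)ε(h')ε. -/

import Mathlib

open TensorProduct LinearMap

noncomputable section

/-- Left regular action of `H` on its dual: `(h ⇀ p)(x) = p (x * h)`. -/
def lact {k H : Type*} [Field k] [Ring H] [Algebra k H]
    (h : H) (p : Module.Dual k H) : Module.Dual k H :=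
  p ∘ₗ LinearMap.mulRight k h

/-- Right regular action of `H` on its dual: `(p ↼ h)(x) = p (h * x)`. -/
def ract {k H : Type*} [Field k] [Ring H] [Algebra k H]
    (h : H) (p : Module.Dual k H) : Module.Dual k H :=
  p ∘ₗ LinearMap.mulLeft k h

variable (k H : Type*) [Field k] [Ring H] [Algebra k H]

/-- `R ⊗ 1` viewed in `H ⊗ (H ⊗ H)` (the element `R₁₂`). -/
def leg12 (R : H ⊗[k] H) : H ⊗[k] (H ⊗[k] H) :=
  TensorProduct.assoc k H H H (R ⊗ₜ[k] (1 : H))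

/-- The element `R₂₃ = 1 ⊗ R` of `H ⊗ (H ⊗ H)`. -/
def leg23 (R : H ⊗[k] H) : H ⊗[k] (H ⊗[k] H) := (1 : H) ⊗ₜ[k] R

/-- The element `R₁₃` of `H ⊗ (H ⊗ H)`. -/
def leg13 (R : H ⊗[k] H) : H ⊗[k] (H ⊗[k] H) :=
  lTensor H (TensorProduct.comm k H H).toLinearMap (leg12 k H R)

/-- `x ⊗ y ⊗ z ↦ y ⊗ x ⊗ z`. -/
def permYXZ : H ⊗[k] (H ⊗[k] H) →ₗ[k] H ⊗[k] (H ⊗[k] H) :=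
  (TensorProduct.assoc k H H H).toLinearMap
    ∘ₗ rTensor H (TensorProduct.comm k H H).toLinearMap
    ∘ₗ (TensorProduct.assoc k H H H).symm.toLinearMap

/-- `x ⊗ y ⊗ z ↦ x ⊗ z ⊗ y`. -/
def permXZY : H ⊗[k] (H ⊗[k] H) →ₗ[k] H ⊗[k] (H ⊗[k] H) :=
  lTensor H (TensorProduct.comm k H H).toLinearMap

/-- `x ⊗ y ⊗ z ↦ y ⊗ z ⊗ x`. -/
def permYZX : H ⊗[k] (H ⊗[k] H) →ₗ[k] H ⊗[k] (H ⊗[k] H) :=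
  permXZY k H ∘ₗ permYXZ k H

/-- `x ⊗ y ⊗ z ↦ z ⊗ x ⊗ y`. -/
def permZXY : H ⊗[k] (H ⊗[k] H) →ₗ[k] H ⊗[k] (H ⊗[k] H) :=
  permYXZ k H ∘ₗ permXZY k H

/-- A quasitriangular quasi-bialgebra `(H, Δ, ε, Φ, R)` over the field `k`. -/
structure QTQB where
  /-- the comultiplication (an algebra map) -/
  Δ : H →ₐ[k] H ⊗[k] H
  /-- the counit (an algebra map) -/
  ε : H →ₐ[k] k
  /-- the associator -/
  Φ : H ⊗[k] (H ⊗[k] H)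
  /-- the inverse of the associator -/
  Φinv : H ⊗[k] (H ⊗[k] H)
  Φ_right_inv : Φ * Φinv = 1
  Φ_left_inv : Φinv * Φ = 1
  /-- `(id ⊗ Δ)(Δ(h)) = Φ ((Δ ⊗ id)(Δ(h))) Φ⁻¹` -/
  quasi_coassoc : ∀ h : H,
    lTensor H Δ.toLinearMap (Δ h)
      = Φ * (TensorProduct.assoc k H H H (rTensor H Δ.toLinearMap (Δ h))) * Φinv
  /-- `(ε ⊗ id)(Δ(h)) = h` -/
  counit_left : ∀ h : H, TensorProduct.lid k H (rTensor H ε.toLinearMap (Δ h)) = h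
  /-- `(id ⊗ ε)(Δ(h)) = h` -/
  counit_right : ∀ h : H, TensorProduct.rid k H (lTensor H ε.toLinearMap (Δ h)) = h
  /-- `(id ⊗ id ⊗ Δ)(Φ) (Δ ⊗ id ⊗ id)(Φ) = (1 ⊗ Φ)(id ⊗ Δ ⊗ id)(Φ)(Φ ⊗ 1)` -/
  pentagon :
    lTensor H (lTensor H Δ.toLinearMap) Φ
      * (TensorProduct.assoc k H H (H ⊗[k] H)).toLinearMap
          (rTensor (H ⊗[k] H) Δ.toLinearMap Φ)
      = ((1 : H) ⊗ₜ[k] Φ)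
        * lTensor H ((TensorProduct.assoc k H H H).toLinearMap ∘ₗ rTensor H Δ.toLinearMap) Φ
        * lTensor H (lTensor H ((TensorProduct.mk k H H).flip 1)) Φ
  /-- `(id ⊗ ε ⊗ id)(Φ) = 1 ⊗ 1` -/
  counit_mid :
    lTensor H ((TensorProduct.lid k H).toLinearMap ∘ₗ rTensor H ε.toLinearMap) Φ = 1
  /-- the R-matrix -/
  R : H ⊗[k] H
  /-- the inverse of the R-matrix -/
  Rinv : H ⊗[k] H
  R_right_inv : R * Rinv = 1
  R_left_inv : Rinv * R = 1
  /-- `(Δ ⊗ id)(R) = Φ₃₁₂ R₁₃ Φ⁻¹₁₃₂ R₂₃ Φ` -/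
  qt1 : TensorProduct.assoc k H H H (rTensor H Δ.toLinearMap R)
      = permYZX k H Φ * leg13 k H R * permXZY k H Φinv * leg23 k H R * Φ
  /-- `(id ⊗ Δ)(R) = Φ⁻¹₂₃₁ R₁₃ Φ₂₁₃ R₁₂ Φ⁻¹` -/
  qt2 : lTensor H Δ.toLinearMap R
      = permZXY k H Φinv * leg13 k H R * permYXZ k H Φ * leg12 k H R * Φinv
  /-- `Δᶜᵒᵖ(h) R = R Δ(h)` -/
  qt3 : ∀ h : H, (TensorProduct.comm k H H) (Δ h) * R = R * Δ h

variable {k H}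

/-- The multiplication of `H*_R`: `(f · g)(h) = Σ g(h₁ R²) f(h₂ R¹)`,
i.e. `f · g = Σ (R² ⇀ g)(R¹ ⇀ f)`. -/
def QTQB.mulR (Q : QTQB k H) (f g : Module.Dual k H) : Module.Dual k H :=
  LinearMap.mul' k k ∘ₗ TensorProduct.map g f
    ∘ₗ LinearMap.mulRight k ((TensorProduct.comm k H H) Q.R) ∘ₗ Q.Δ.toLinearMap

namespace QTQB

variable (Q : QTQB k H)

/-- `ε ⊗ id : H ⊗ H → H`. -/
def counitFst : H ⊗[k] H →ₐ[k] H :=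
  (Algebra.TensorProduct.lid k H).toAlgHom.comp
    (Algebra.TensorProduct.map Q.ε (AlgHom.id k H))

/-- `id ⊗ ε : H ⊗ H → H`. -/
def counitSnd : H ⊗[k] H →ₐ[k] H :=
  (Algebra.TensorProduct.rid k k H).toAlgHom.comp
    (Algebra.TensorProduct.map (AlgHom.id k H) Q.ε)

/-- `ε ⊗ ε ⊗ id : H ⊗ H ⊗ H → H`. -/
def counit12 : H ⊗[k] (H ⊗[k] H) →ₐ[k] H :=
  Q.counitFst.comp (Algebra.TensorProduct.map (AlgHom.id k H) Q.counitFst)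

/-- `ε ⊗ id ⊗ ε : H ⊗ H ⊗ H → H`. -/
def counit13 : H ⊗[k] (H ⊗[k] H) →ₐ[k] H :=
  Q.counitFst.comp (Algebra.TensorProduct.map (AlgHom.id k H) Q.counitSnd)

/-- `id ⊗ ε ⊗ ε : H ⊗ H ⊗ H → H`. -/
def counit23 : H ⊗[k] (H ⊗[k] H) →ₐ[k] H :=
  Q.counitSnd.comp (Algebra.TensorProduct.map (AlgHom.id k H) Q.counitSnd)

/-- `ε ⊗ ε ⊗ id ⊗ ε : H ⊗ H ⊗ H ⊗ H → H`. -/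
def counit124 : H ⊗[k] (H ⊗[k] (H ⊗[k] H)) →ₐ[k] H :=
  Q.counitFst.comp (Algebra.TensorProduct.map (AlgHom.id k H) Q.counit13)

@[simp] lemma counitFst_tmul (a b : H) : Q.counitFst (a ⊗ₜ[k] b) = Q.ε a • b := by
  simp [counitFst]

@[simp] lemma counitSnd_tmul (a b : H) : Q.counitSnd (a ⊗ₜ[k] b) = Q.ε b • a := by
  simp [counitSnd]

@[simp] lemma counit12_tmul (a : H) (t : H ⊗[k] H) :
    Q.counit12 (a ⊗ₜ[k] t) = Q.ε a • Q.counitFst t := by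
  simp [counit12]

@[simp] lemma counit13_tmul (a : H) (t : H ⊗[k] H) :
    Q.counit13 (a ⊗ₜ[k] t) = Q.ε a • Q.counitSnd t := by
  simp [counit13]

@[simp] lemma counit23_tmul (a : H) (t : H ⊗[k] H) :
    Q.counit23 (a ⊗ₜ[k] t) = Q.ε (Q.counitSnd t) • a := by
  simp [counit23]

@[simp] lemma counit124_tmul (a : H) (t : H ⊗[k] (H ⊗[k] H)) :
    Q.counit124 (a ⊗ₜ[k] t) = Q.ε a • Q.counit13 t := by
  simp [counit124]

@[simp] lemma counitFst_comul (h : H) : Q.counitFst (Q.Δ h) = h :=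
  Q.counit_left h

@[simp] lemma counitSnd_comul (h : H) : Q.counitSnd (Q.Δ h) = h :=
  Q.counit_right h

lemma ε_counitSnd (t : H ⊗[k] H) : Q.ε (Q.counitSnd t) = Q.ε (Q.counitFst t) := by
  induction t with
  | zero => simp
  | tmul a b => simp [mul_comm]
  | add x y hx hy => simp [hx, hy]

lemma map_counitFst_Φ :
    Algebra.TensorProduct.map (AlgHom.id k H) Q.counitFst Q.Φ = 1 :=
  Q.counit_mid

lemma counit12_Φ : Q.counit12 Q.Φ = 1 := by
  simp [counit12, map_counitFst_Φ]

lemma counit23_eq (t : H ⊗[k] (H ⊗[k] H)) : Q.counit23 t =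
    Q.counitSnd (Algebra.TensorProduct.map (AlgHom.id k H) Q.counitFst t) := by
  induction t with
  | zero => simp
  | tmul a t => simp [ε_counitSnd]
  | add x y hx hy => simp [hx, hy]

lemma counit23_Φ : Q.counit23 Q.Φ = 1 := by
  simp [counit23_eq, map_counitFst_Φ]

lemma map_Φinv {A : Type*} [Semiring A] [Algebra k A] (F : H ⊗[k] (H ⊗[k] H) →ₐ[k] A)
    (hF : F Q.Φ = 1) : F Q.Φinv = 1 := by
  have h := congrArg F Q.Φ_right_inv
  rwa [map_mul, hF, one_mul, map_one] at h

lemma counit124_lTensor_lTensor_comul (t : H ⊗[k] (H ⊗[k] H)) :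
    Q.counit124 (lTensor H (lTensor H Q.Δ.toLinearMap) t) = Q.counit12 t := by
  induction t with
  | zero => simp
  | tmul a t =>
    induction t with
    | zero => simp
    | tmul b c => simp
    | add x y hx hy => simp_all [tmul_add]
  | add x y hx hy => simp [hx, hy]

lemma counit124_assoc_tmul (s t : H ⊗[k] H) :
    Q.counit124 (TensorProduct.assoc k H H (H ⊗[k] H) (s ⊗ₜ[k] t))
      = Q.ε (Q.counitFst s) • Q.counitSnd t := by
  induction s with
  | zero => simp
  | tmul a b => simp [mul_smul]
  | add x y hx hy => simp [hx, hy, add_tmul, add_smul]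

lemma counit124_assoc_rTensor_comul (t : H ⊗[k] (H ⊗[k] H)) :
    Q.counit124 (TensorProduct.assoc k H H (H ⊗[k] H)
      (rTensor (H ⊗[k] H) Q.Δ.toLinearMap t)) = Q.counit13 t := by
  induction t with
  | zero => simp
  | tmul a t => simp [counit124_assoc_tmul]
  | add x y hx hy => simp [hx, hy]

lemma counit13_assoc_tmul (s : H ⊗[k] H) (c : H) :
    Q.counit13 (TensorProduct.assoc k H H H (s ⊗ₜ[k] c)) = Q.ε c • Q.counitFst s := by
  induction s with
  | zero => simp
  | tmul a b => simp [smul_smul, mul_comm]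
  | add x y hx hy => simp [hx, hy, add_tmul]

lemma counit124_lTensor_assoc_comul (t : H ⊗[k] (H ⊗[k] H)) :
    Q.counit124 (lTensor H ((TensorProduct.assoc k H H H).toLinearMap
      ∘ₗ rTensor H Q.Δ.toLinearMap) t) = Q.counit13 t := by
  induction t with
  | zero => simp
  | tmul a t =>
    induction t with
    | zero => simp
    | tmul b c => simp [counit13_assoc_tmul]
    | add x y hx hy => simp_all [tmul_add]
  | add x y hx hy => simp [hx, hy]

lemma counit124_tmul_one (t : H ⊗[k] (H ⊗[k] H)) :
    Q.counit124 (lTensor H (lTensor H ((TensorProduct.mk k H H).flip 1)) t)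
      = Q.counit12 t := by
  induction t with
  | zero => simp
  | tmul a t =>
    induction t with
    | zero => simp
    | tmul b c => simp
    | add x y hx hy => simp_all [tmul_add]
  | add x y hx hy => simp [hx, hy]

lemma counit13_Φ : Q.counit13 Q.Φ = 1 := by
  have h := congrArg Q.counit124 Q.pentagon
  simp only [map_mul, LinearEquiv.coe_coe, counit124_lTensor_lTensor_comul,
    counit124_assoc_rTensor_comul, counit124_lTensor_assoc_comul, counit124_tmul_one,
    counit12_Φ, counit124_tmul, map_one, one_smul, one_mul, mul_one] at h
  have hinv : Q.counit13 Q.Φ * Q.counit13 Q.Φinv = 1 := by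
    rw [← map_mul, Q.Φ_right_inv, map_one]
  have h' := congrArg (· * Q.counit13 Q.Φinv) h
  simpa [mul_assoc, hinv] using h'.symm

lemma counit12_permYZX (t : H ⊗[k] (H ⊗[k] H)) :
    Q.counit12 (permYZX k H t) = Q.counit23 t := by
  induction t with
  | zero => simp
  | tmul a t =>
    induction t with
    | zero => simp
    | tmul b c => simp [permYZX, permXZY, permYXZ, smul_smul, mul_comm]
    | add x y hx hy => simp_all [tmul_add]
  | add x y hx hy => simp [hx, hy]

lemma counit12_permXZY (t : H ⊗[k] (H ⊗[k] H)) :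
    Q.counit12 (permXZY k H t) = Q.counit13 t := by
  induction t with
  | zero => simp
  | tmul a t =>
    induction t with
    | zero => simp
    | tmul b c => simp [permXZY]
    | add x y hx hy => simp_all [tmul_add]
  | add x y hx hy => simp [hx, hy]

lemma counit23_permZXY (t : H ⊗[k] (H ⊗[k] H)) :
    Q.counit23 (permZXY k H t) = Q.counit12 t := by
  induction t with
  | zero => simp
  | tmul a t =>
    induction t with
    | zero => simp
    | tmul b c => simp [permZXY, permXZY, permYXZ, smul_smul, mul_comm]
    | add x y hx hy => simp_all [tmul_add]
  | add x y hx hy => simp [hx, hy]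

lemma counit23_permYXZ (t : H ⊗[k] (H ⊗[k] H)) :
    Q.counit23 (permYXZ k H t) = Q.counit13 t := by
  induction t with
  | zero => simp
  | tmul a t =>
    induction t with
    | zero => simp
    | tmul b c => simp [permYXZ, smul_smul, mul_comm]
    | add x y hx hy => simp_all [tmul_add]
  | add x y hx hy => simp [hx, hy]

lemma counit12_leg13 (t : H ⊗[k] H) : Q.counit12 (leg13 k H t) = Q.counitFst t := by
  induction t with
  | zero => simp [leg13, leg12]
  | tmul a b => simp [leg13, leg12]
  | add x y hx hy => simp_all [leg13, leg12, add_tmul]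

lemma counit12_leg23 (t : H ⊗[k] H) : Q.counit12 (leg23 k H t) = Q.counitFst t := by
  simp [leg23]

lemma counit23_leg13 (t : H ⊗[k] H) : Q.counit23 (leg13 k H t) = Q.counitSnd t := by
  induction t with
  | zero => simp [leg13, leg12]
  | tmul a b => simp [leg13, leg12]
  | add x y hx hy => simp_all [leg13, leg12, add_tmul]

lemma counit23_leg12 (t : H ⊗[k] H) : Q.counit23 (leg12 k H t) = Q.counitSnd t := by
  induction t with
  | zero => simp [leg12]
  | tmul a b => simp [leg12]
  | add x y hx hy => simp_all [leg12, add_tmul]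

lemma counit12_assoc_tmul (s : H ⊗[k] H) (c : H) :
    Q.counit12 (TensorProduct.assoc k H H H (s ⊗ₜ[k] c)) = Q.ε (Q.counitFst s) • c := by
  induction s with
  | zero => simp
  | tmul a b => simp [mul_smul]
  | add x y hx hy => simp [hx, hy, add_tmul, add_smul]

lemma counit12_assoc_rTensor_comul (t : H ⊗[k] H) :
    Q.counit12 (TensorProduct.assoc k H H H (rTensor H Q.Δ.toLinearMap t))
      = Q.counitFst t := by
  induction t with
  | zero => simp
  | tmul a b => simp [counit12_assoc_tmul]
  | add x y hx hy => simp [hx, hy]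

lemma counit23_lTensor_comul (t : H ⊗[k] H) :
    Q.counit23 (lTensor H Q.Δ.toLinearMap t) = Q.counitSnd t := by
  induction t with
  | zero => simp
  | tmul a b => simp
  | add x y hx hy => simp [hx, hy]

lemma isUnit_R : IsUnit Q.R :=
  ⟨⟨Q.R, Q.Rinv, Q.R_right_inv, Q.R_left_inv⟩, rfl⟩

/-- `(ε ⊗ id)(R) = 1`. -/
lemma counitFst_R : Q.counitFst Q.R = 1 := by
  have h := congrArg Q.counit12 Q.qt1
  simp only [map_mul, counit12_assoc_rTensor_comul, counit12_permYZX, counit12_permXZY,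
    counit12_leg13, counit12_leg23, counit12_Φ, counit23_Φ,
    Q.map_Φinv _ Q.counit13_Φ, one_mul, mul_one] at h
  exact (Q.isUnit_R.map Q.counitFst).mul_left_cancel (by rw [← h, mul_one])

/-- `(id ⊗ ε)(R) = 1`. -/
lemma counitSnd_R : Q.counitSnd Q.R = 1 := by
  have h := congrArg Q.counit23 Q.qt2
  simp only [map_mul, counit23_lTensor_comul, counit23_permZXY, counit23_permYXZ,
    counit23_leg13, counit23_leg12, counit13_Φ, Q.map_Φinv _ Q.counit12_Φ,
    Q.map_Φinv _ Q.counit23_Φ, one_mul, mul_one] at h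
  exact (Q.isUnit_R.map Q.counitSnd).mul_left_cancel (by rw [← h, mul_one])

lemma mulR_apply (f g : Module.Dual k H) (x : H) :
    Q.mulR f g x = LinearMap.mul' k k
      (TensorProduct.map g f (Q.Δ x * TensorProduct.comm k H H Q.R)) :=
  rfl

lemma counitFst_comm (t : H ⊗[k] H) :
    Q.counitFst (TensorProduct.comm k H H t) = Q.counitSnd t := by
  induction t with
  | zero => simp
  | tmul a b => simp
  | add x y hx hy => simp [hx, hy]

lemma counitSnd_comm (t : H ⊗[k] H) :
    Q.counitSnd (TensorProduct.comm k H H t) = Q.counitFst t := by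
  induction t with
  | zero => simp
  | tmul a b => simp
  | add x y hx hy => simp [hx, hy]

lemma counit_mulR (f : Module.Dual k H) : Q.mulR Q.ε.toLinearMap f = f := by
  have key (t : H ⊗[k] H) : LinearMap.mul' k k
      (TensorProduct.map f Q.ε.toLinearMap t) = f (Q.counitSnd t) := by
    induction t with
    | zero => simp
    | tmul a b => simp [mul_comm]
    | add x y hx hy => simp [hx, hy]
  ext x
  simp [mulR_apply, key, counitSnd_comm, counitFst_R]

lemma mulR_counit (f : Module.Dual k H) : Q.mulR f Q.ε.toLinearMap = f := by
  have key (t : H ⊗[k] H) : LinearMap.mul' k k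
      (TensorProduct.map Q.ε.toLinearMap f t) = f (Q.counitFst t) := by
    induction t with
    | zero => simp
    | tmul a b => simp
    | add x y hx hy => simp [hx, hy]
  ext x
  simp [mulR_apply, key, counitFst_comm, counitSnd_R]

lemma comm_mul (s t : H ⊗[k] H) : TensorProduct.comm k H H (s * t) =
    TensorProduct.comm k H H s * TensorProduct.comm k H H t :=
  map_mul (Algebra.TensorProduct.comm k H H) s t

/-- `Δ(h) R₂₁ = R₂₁ Δᶜᵒᵖ(h)`. -/
lemma comul_mul_comm_R (h : H) : Q.Δ h * TensorProduct.comm k H H Q.R =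
    TensorProduct.comm k H H Q.R * TensorProduct.comm k H H (Q.Δ h) := by
  have := congrArg (TensorProduct.comm k H H) (Q.qt3 h)
  rwa [comm_mul, comm_mul, TensorProduct.comm_comm] at this

lemma map_lact_ract (f g : Module.Dual k H) (a₁ a₂ b₁ b₂ : H) (t : H ⊗[k] H) :
    TensorProduct.map (lact a₂ (ract b₁ g)) (lact a₁ (ract b₂ f)) t =
      TensorProduct.map g f ((b₁ ⊗ₜ[k] b₂) * t * (a₂ ⊗ₜ[k] a₁)) := by
  induction t with
  | zero => simp
  | tmul x y => simp [lact, ract, mul_assoc]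
  | add x y hx hy => simp only [map_add, hx, hy, mul_add, add_mul]

end QTQB

/-- Let `(H, Φ, R)` be a quasitriangular quasi-bialgebra over a field `k`.
Then `H*_R` is compatible with the `H–H^cop`-bimodule structure given by the regular
actions: for all `f, g ∈ H*` and `h, h' ∈ H` one has
`h ⇀ (f·g) ↼ h' = Σ (h₁ ⇀ f ↼ h'₂) · (h₂ ⇀ g ↼ h'₁)`
(where the Sweedler sums run over any finite representations of `Δ h` and `Δ h'`);
moreover `ε · f = f · ε = f` and `h ⇀ ε ↼ h' = ε(h) ε(h') ε`. -/
theorem heisenberg_bimodule_algebra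
    {k H : Type*} [Field k] [Ring H] [Algebra k H] (Q : QTQB k H) :
    (∀ (f g : Module.Dual k H) (h h' : H) (n m : ℕ)
        (a₁ a₂ : Fin n → H) (b₁ b₂ : Fin m → H),
        Q.Δ h = ∑ i, a₁ i ⊗ₜ[k] a₂ i →
        Q.Δ h' = ∑ j, b₁ j ⊗ₜ[k] b₂ j →
        lact h (ract h' (Q.mulR f g))
          = ∑ i, ∑ j, Q.mulR (lact (a₁ i) (ract (b₂ j) f)) (lact (a₂ i) (ract (b₁ j) g)))
    ∧ (∀ f : Module.Dual k H,
        Q.mulR Q.ε.toLinearMap f = f ∧ Q.mulR f Q.ε.toLinearMap = f)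
    ∧ (∀ h h' : H,
        lact h (ract h' (Q.ε.toLinearMap : Module.Dual k H))
          = (Q.ε h * Q.ε h') • (Q.ε.toLinearMap : Module.Dual k H)) := by
  refine ⟨fun f g h h' n m a₁ a₂ b₁ b₂ hh hh' => ?_,
    fun f => ⟨Q.counit_mulR f, Q.mulR_counit f⟩, fun h h' => ?_⟩
  · ext x
    have e : lact h (ract h' (Q.mulR f g)) x = Q.mulR f g (h' * (x * h)) := rfl
    have key : Q.Δ (h' * (x * h)) * TensorProduct.comm k H H Q.R =
        Q.Δ h' * (Q.Δ x * TensorProduct.comm k H H Q.R) *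
          TensorProduct.comm k H H (Q.Δ h) := by
      rw [map_mul, map_mul, mul_assoc, mul_assoc, Q.comul_mul_comm_R]
      simp only [mul_assoc]
    rw [e, Q.mulR_apply, key, hh, hh']
    simp only [map_sum, TensorProduct.comm_tmul, Finset.sum_mul, Finset.mul_sum,
      LinearMap.sum_apply, Q.mulR_apply, QTQB.map_lact_ract]
  · ext x
    simp only [lact, ract, LinearMap.comp_apply, LinearMap.mulRight_apply,
      LinearMap.mulLeft_apply, AlgHom.toLinearMap_apply, map_mul, LinearMap.smul_apply,
      smul_eq_mul]
    ring
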